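/- arXiv:1509.02104 — 2 statements merged into one kernel-verified Lean document; each statement's English description precedes it below -/
import Mathlib

section
/- Let G be a finite group with π_e(G) ⊆ {1,2,3,4,6} which has exactly three cyclic subgroups of order 6, and suppose there exist two cyclic subgroups of order 6 of G whose intersection has order 3. Then |G| ≤ 144. -/
/-!
Let `a` have order `n`, let `C` be its centralizer, and suppose that `C` has exponent `n`. Then
every coset of `⟨a⟩` in `C` contains some `h` with `⟨h⟩ ∩ ⟨a⟩ = 1`, and multiplying `h` by the
generators of `⟨a⟩` gives `φ n` elements of order `n` in that coset. If `G` has `k` cyclic subgroups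
of order `n`, it has `φ n * k` elements of order `n`, so there are at most `k` cosets and
`|C| ≤ n * k`. The conjugates of `a` also have order `n`, so `|G : C| ≤ φ n * k`, whence
`|G| ≤ n * φ n * k ^ 2`. For `n = 6` the exponent condition holds because an element of order 4
commuting with `a` would give an element `g * a ^ 2` of order 12; with `k = 3` the bound is 108.
-/

open Subgroup

theorem encard_eq_encard_mul_of_encard_fiber {α β : Type*} {f : α → β} {s : Set α} {t : Set β}
    {n : ℕ} (hf : Set.MapsTo f s t) (hfiber : ∀ b ∈ t, {a ∈ s | f a = b}.encard = n) :
    s.encard = t.encard * n := by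
  have fiber_equiv (b : t) : Nonempty ({a // hf.restrict f s t a = b} ≃ Fin n) := by
    have himage : (↑) '' {a : s | hf.restrict f s t a = b} = {a ∈ s | f a = b} := by
      ext a
      simp [Subtype.ext_iff, and_comm]
    have hcard : {a | hf.restrict f s t a = b}.encard = n := by
      rw [← Subtype.val_injective.encard_image, himage, hfiber b b.2]
    have := Set.finite_of_encard_eq_coe hcard
    exact ⟨this.equivFinOfCardEq (by simpa [Set.ncard] using congrArg ENat.toNat hcard)⟩
  have sigma_equiv := (Equiv.sigmaFiberEquiv (hf.restrict f s t)).symm.trans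
    (Equiv.sigmaEquivProdOfEquiv fun b ↦ (fiber_equiv b).some)
  simpa [ENat.card_prod] using ENat.card_congr sigma_equiv

section

variable {G : Type*} [Group G]

theorem exists_mem_zpowers_disjoint_zpowers_mul {g a : G} (hcomm : Commute g a)
    (ha : orderOf a ≠ 0) (hg : g ^ orderOf a = 1) :
    ∃ c ∈ zpowers a, Disjoint (zpowers (g * c)) (zpowers a) := by
  -- `d` is the order of `g` modulo `⟨a⟩`; it divides `j` when `g ^ d = a ^ j`, so `g` can be
  -- corrected by a power of `a` to have `d`-th power `1`.
  set d := MulAction.period g ((1 : G) : G ⧸ zpowers a)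
  have zpow_mem_iff (t : ℤ) : g ^ t ∈ zpowers a ↔ (d : ℤ) ∣ t := by
    rw [← MulAction.zpow_smul_eq_iff_period_dvd, MulAction.Quotient.smul_mk, eq_comm,
      QuotientGroup.eq]
    simp
  obtain ⟨e, he⟩ : (d : ℤ) ∣ orderOf a := (zpow_mem_iff _).1 (by simp [hg])
  obtain ⟨j, hj⟩ := mem_zpowers_iff.1 ((zpow_mem_iff d).2 dvd_rfl)
  have he0 : e ≠ 0 := by
    rintro rfl
    exact ha (by simpa using he)
  obtain ⟨m, rfl⟩ : (d : ℤ) ∣ j := by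
    refine (mul_dvd_mul_iff_right he0).1 ?_
    rw [← he, orderOf_dvd_iff_zpow_eq_one, zpow_mul, hj, ← zpow_mul, ← he, zpow_natCast, hg]
  have hpow : (g * a ^ (-m)) ^ (d : ℤ) = 1 := by
    rw [(hcomm.zpow_right _).mul_zpow, ← hj, ← zpow_mul, ← zpow_add]
    simp [mul_comm]
  refine ⟨a ^ (-m), zpow_mem_zpowers a _, disjoint_def.2 ?_⟩
  rintro _ ⟨t, rfl⟩ (ht : (g * a ^ (-m)) ^ t ∈ zpowers a)
  rw [(hcomm.zpow_right _).mul_zpow, mul_mem_cancel_right (zpow_mem (zpow_mem_zpowers a _) _),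
    zpow_mem_iff] at ht
  obtain ⟨s, rfl⟩ := ht
  change (g * a ^ (-m)) ^ (d * s) = 1
  rw [zpow_mul, hpow, one_zpow]

theorem orderOf_mul_eq_lcm_of_disjoint_zpowers {x y : G} (hcomm : Commute x y)
    (hdisj : Disjoint (zpowers x) (zpowers y)) :
    orderOf (x * y) = (orderOf x).lcm (orderOf y) := by
  refine Nat.dvd_antisymm hcomm.orderOf_mul_dvd_lcm ?_
  have hxy : x ^ orderOf (x * y) = (y ^ orderOf (x * y))⁻¹ := by
    rw [← mul_eq_one_iff_eq_inv, ← hcomm.mul_pow, pow_orderOf_eq_one]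
  have hx : x ^ orderOf (x * y) = 1 :=
    disjoint_def.1 hdisj (npow_mem_zpowers x _) (hxy ▸ inv_mem (npow_mem_zpowers y _))
  exact Nat.lcm_dvd (orderOf_dvd_of_pow_eq_one hx)
    (orderOf_dvd_of_pow_eq_one (by rwa [hx, eq_comm, inv_eq_one] at hxy))

theorem orderOf_mul_eq_of_zpowers_eq {h a b : G} (hcomm : Commute h a)
    (hpow : h ^ orderOf a = 1) (hdisj : Disjoint (zpowers h) (zpowers a))
    (hb : zpowers b = zpowers a) : orderOf (h * b) = orderOf a := by
  have hba : orderOf b = orderOf a := by rw [← Nat.card_zpowers, hb, Nat.card_zpowers]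
  obtain ⟨k, rfl⟩ := mem_zpowers_iff.1 (hb ▸ mem_zpowers b)
  rw [orderOf_mul_eq_lcm_of_disjoint_zpowers (hcomm.zpow_right k) (hb ▸ hdisj), hba]
  exact Nat.lcm_eq_right (orderOf_dvd_of_pow_eq_one hpow)

theorem encard_setOf_zpowers_eq (H : Subgroup G) [IsCyclic H] [Finite H] :
    {g : G | zpowers g = H}.encard = (Nat.card H).totient := by
  classical
  have := Fintype.ofFinite H
  have himage : {g : G | zpowers g = H} = (↑) '' {x : H | orderOf x = Nat.card H} := by
    ext g
    constructor
    · rintro rfl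
      exact ⟨⟨g, mem_zpowers g⟩, by simp [Nat.card_zpowers, -Nat.card_eq_fintype_card], rfl⟩
    · rintro ⟨x, hx : orderOf x = Nat.card H, rfl⟩
      refine eq_of_le_of_card_ge (zpowers_le.2 x.2) ?_
      rw [Nat.card_zpowers, orderOf_coe, hx]
  rw [himage, Subtype.val_injective.encard_image, Set.encard_eq_coe_toFinset_card,
    Set.toFinset_ofPred, IsCyclic.card_orderOf_eq_totient (by simp)]

theorem encard_setOf_orderOf_eq {n : ℕ} (hn : n ≠ 0) :
    {g : G | orderOf g = n}.encard =
      n.totient * {H : Subgroup G | IsCyclic H ∧ Nat.card H = n}.encard := by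
  rw [mul_comm]
  refine encard_eq_encard_mul_of_encard_fiber (f := zpowers) ?_ ?_
  · rintro g rfl
    exact ⟨inferInstance, Nat.card_zpowers g⟩
  · rintro H ⟨_, rfl⟩
    have := Nat.finite_of_card_ne_zero hn
    rw [← encard_setOf_zpowers_eq H]
    congr 1
    ext g
    refine and_iff_right_of_imp ?_
    rintro rfl
    exact (Nat.card_zpowers g).symm

theorem enatCard_quotient_zpowers_mul_totient_le_encard {a : G} (hcomm : ∀ g, Commute g a)
    (ha : orderOf a ≠ 0) (hexp : ∀ g : G, g ^ orderOf a = 1) :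
    ENat.card (G ⧸ zpowers a) * (orderOf a).totient ≤
      {g : G | orderOf g = orderOf a}.encard := by
  have hrep (q : G ⧸ zpowers a) :
      ∃ h : G, (h : G ⧸ zpowers a) = q ∧ Disjoint (zpowers h) (zpowers a) := by
    induction q using QuotientGroup.induction_on with | H g
    obtain ⟨c, hc, hdisj⟩ := exists_mem_zpowers_disjoint_zpowers_mul (hcomm g) ha (hexp g)
    exact ⟨g * c, QuotientGroup.mk_mul_of_mem g hc, hdisj⟩
  choose rep mk_rep disjoint_rep using hrep
  let mulRep (p : (G ⧸ zpowers a) × {b : G | zpowers b = zpowers a}) :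
      {g : G | orderOf g = orderOf a} :=
    ⟨rep p.1 * p.2, orderOf_mul_eq_of_zpowers_eq (hcomm _) (hexp _) (disjoint_rep p.1) p.2.2⟩
  have mulRep_injective : Function.Injective mulRep := by
    rintro ⟨q, b, hb⟩ ⟨r, c, hc⟩ heq
    replace heq : rep q * b = rep r * c := congrArg Subtype.val heq
    have hqr : q = r := by
      rw [← mk_rep q, ← mk_rep r, ← QuotientGroup.mk_mul_of_mem (rep q) (hb ▸ mem_zpowers b), heq,
        QuotientGroup.mk_mul_of_mem (rep r) (hc ▸ mem_zpowers c)]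
    subst hqr
    simpa using heq
  have : Finite (zpowers a) := Nat.finite_of_card_ne_zero (by rwa [Nat.card_zpowers])
  have hgenerators := encard_setOf_zpowers_eq (zpowers a)
  rw [Nat.card_zpowers] at hgenerators
  have := ENat.card_le_card_of_injective mulRep_injective
  rwa [ENat.card_prod, ENat.card_coe_set_eq, ENat.card_coe_set_eq, hgenerators] at this

theorem enatCard_quotient_centralizer_le_encard_orderOf_eq (a : G) :
    ENat.card (G ⧸ centralizer {a}) ≤ {g : G | orderOf g = orderOf a}.encard := by
  let conjugate (q : G ⧸ centralizer {a}) : {g : G | orderOf g = orderOf a} :=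
    ⟨q.out * a * q.out⁻¹, (MulAut.conj q.out).orderOf_eq a⟩
  refine ENat.card_le_card_of_injective (f := conjugate) fun q r heq ↦ ?_
  replace heq : q.out * a * q.out⁻¹ = r.out * a * r.out⁻¹ := congrArg Subtype.val heq
  rw [← q.out_eq', ← r.out_eq', QuotientGroup.eq, mem_centralizer_singleton_iff]
  calc q.out⁻¹ * r.out * a = q.out⁻¹ * (r.out * a * r.out⁻¹) * r.out := by group
    _ = a * (q.out⁻¹ * r.out) := by rw [← heq]; group

theorem enatCard_centralizer_le_mul_encard {a : G} (ha : orderOf a ≠ 0)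
    (hexp : ∀ g, Commute g a → g ^ orderOf a = 1) :
    ENat.card (centralizer {a}) ≤
      orderOf a * {H : Subgroup G | IsCyclic H ∧ Nat.card H = orderOf a}.encard := by
  let a' : centralizer {a} := ⟨a, mem_centralizer_singleton_iff.2 rfl⟩
  have ha' : orderOf a' = orderOf a := orderOf_mk a _
  have commute_a (g : centralizer {a}) : Commute (g : G) a := mem_centralizer_singleton_iff.1 g.2
  have hquot := enatCard_quotient_zpowers_mul_totient_le_encard (a := a')
    (fun g ↦ Subtype.ext (commute_a g)) (ha' ▸ ha)
    (fun g ↦ Subtype.ext (by simpa [ha'] using hexp g (commute_a g)))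
  have horder : {g : centralizer {a} | orderOf g = orderOf a}.encard ≤
      {g : G | orderOf g = orderOf a}.encard :=
    Set.encard_le_encard_of_injOn (f := (↑)) (fun g hg ↦ (orderOf_coe g).trans hg)
      Subtype.val_injective.injOn
  have hφ : ((orderOf a).totient : ℕ∞) ≠ 0 := by simp [ha]
  rw [ha'] at hquot
  have hindex := (ENat.mul_le_mul_right_iff hφ (ENat.natCast_ne_top _)).1
    (hquot.trans (horder.trans_eq ((encard_setOf_orderOf_eq ha).trans (mul_comm _ _))))
  calc ENat.card (centralizer {a})
      = ENat.card (zpowers a') * ENat.card (centralizer {a} ⧸ zpowers a') := by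
        rw [ENat.card_congr (groupEquivQuotientProdSubgroup (s := zpowers a')), ENat.card_prod,
          mul_comm]
    _ ≤ orderOf a * {H : Subgroup G | IsCyclic H ∧ Nat.card H = orderOf a}.encard := by
        gcongr
        have : Finite (zpowers a') := finite_zpowers.2 (orderOf_pos_iff.1 (by omega))
        rw [ENat.card_eq_coe_natCard, Nat.card_zpowers, ha']

theorem enatCard_le_of_forall_commute_pow_eq_one {a : G} (ha : orderOf a ≠ 0)
    (hexp : ∀ g, Commute g a → g ^ orderOf a = 1) :
    ENat.card G ≤ orderOf a * (orderOf a).totient *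
      {H : Subgroup G | IsCyclic H ∧ Nat.card H = orderOf a}.encard ^ 2 := by
  set k := {H : Subgroup G | IsCyclic H ∧ Nat.card H = orderOf a}.encard
  calc ENat.card G = ENat.card (G ⧸ centralizer {a}) * ENat.card (centralizer {a}) := by
        rw [ENat.card_congr (groupEquivQuotientProdSubgroup (s := centralizer {a})),
          ENat.card_prod]
    _ ≤ ((orderOf a).totient * k) * (orderOf a * k) := by
        gcongr
        · exact (enatCard_quotient_centralizer_le_encard_orderOf_eq a).trans_eq
            (encard_setOf_orderOf_eq ha)
        · exact enatCard_centralizer_le_mul_encard ha hexp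
    _ = orderOf a * (orderOf a).totient * k ^ 2 := by ring

theorem pow_six_eq_one_of_commute
    (horders : ∀ g : G, orderOf g ∈ ({1, 2, 3, 4, 6} : Set ℕ)) {a : G} (ha : orderOf a = 6)
    {g : G} (hcomm : Commute g a) : g ^ 6 = 1 := by
  have order_ne_four : orderOf g ≠ 4 := by
    intro hg
    have ha2 : orderOf (a ^ 2) = 3 := by
      rw [orderOf_pow_of_dvd two_ne_zero (by rw [ha]; decide), ha]
    have hga : orderOf (g * a ^ 2) = 12 := by
      rw [(hcomm.pow_right 2).orderOf_mul_eq_mul_orderOf_of_coprime (by norm_num [hg, ha2]),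
        hg, ha2]
    exact absurd (horders (g * a ^ 2)) (by rw [hga]; decide)
  rw [← orderOf_dvd_iff_pow_eq_one]
  obtain h | h | h | h | (h : orderOf g = 6) := horders g
  case inr.inr.inr.inl => exact absurd h order_ne_four
  all_goals simp [h]

theorem card_le_144_of_three_cyclic_subgroups_of_order_six_general
    (horders : ∀ g : G, orderOf g ∈ ({1, 2, 3, 4, 6} : Set ℕ))
    (hfinite : {H : Subgroup G | IsCyclic H ∧ Nat.card H = 6}.Finite)
    (hnonempty : {H : Subgroup G | IsCyclic H ∧ Nat.card H = 6}.Nonempty) :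
    Finite G ∧ Nat.card G ≤ 12 * {H : Subgroup G | IsCyclic H ∧ Nat.card H = 6}.ncard ^ 2 := by
  obtain ⟨H, hcyclic, hcard⟩ := hnonempty
  obtain ⟨a, ha⟩ := IsCyclic.exists_ofOrder_eq_natCard (α := H)
  rw [hcard, ← orderOf_coe] at ha
  have hbound := enatCard_le_of_forall_commute_pow_eq_one (a := (a : G)) (by omega)
    fun g hg ↦ by rw [ha, pow_six_eq_one_of_commute horders ha hg]
  rw [ha, show Nat.totient 6 = 2 by decide, ← hfinite.cast_ncard_eq] at hbound
  norm_cast at hbound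
  have hG : Finite G := ENat.card_lt_top.1 (hbound.trans_lt (ENat.natCast_lt_top _))
  rw [ENat.card_eq_coe_natCard] at hbound
  exact ⟨hG, by exact_mod_cast hbound⟩

end

/-- Let `G` be a finite group with `π_e(G) ⊆ {1,2,3,4,6}` which has exactly three cyclic
subgroups of order 6, two of which intersect in a subgroup of order 3. Then `|G| ≤ 144`. -/
theorem card_le_144_of_three_cyclic_subgroups_of_order_six
    (G : Type) [Group G] [Finite G]
    (horders : ∀ g : G, orderOf g ∈ ({1, 2, 3, 4, 6} : Set ℕ))
    (hthree : {H : Subgroup G | IsCyclic H ∧ Nat.card H = 6}.ncard = 3)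
    (hexists : ∃ H K : Subgroup G, IsCyclic H ∧ Nat.card H = 6 ∧ IsCyclic K ∧
      Nat.card K = 6 ∧ H ≠ K ∧ Nat.card (H ⊓ K : Subgroup G) = 3) :
    Nat.card G ≤ 144 := by
  obtain ⟨H, -, hcyclic, hcard, -⟩ := hexists
  have hbound := (card_le_144_of_three_cyclic_subgroups_of_order_six_general horders
    (Set.toFinite _) ⟨H, hcyclic, hcard⟩).2
  rw [hthree] at hbound
  omega
end

section
/- Let G be a finite group with π_e(G) ⊆ {1,2,3,4,6} whose cyclic subgroups of order 6 are exactly the three subgroups ⟨a⟩, ⟨b⟩, ⟨c⟩, where a, b, c have order 6 and a² = b² = c². Suppose a³ ∉ Z(G), the subgroup C_G(a³) ∩ C_G(b³) has index 2 in C_G(a³), and a³ ∉ C_G(a³) ∩ C_G(b³). Then G is isomorphic to S_3 × Z_3. -/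
/-!
Put `x = a ^ 3` and `y = b ^ 3`. The subgroups generated by `a`, `b` and `x * b * x⁻¹` have
distinct involutions `x`, `y`, `x * y * x⁻¹`, so they are all the cyclic subgroups of order 6, and
these three involutions form a conjugation-invariant set `T`. Hence `G` acts on `T` by conjugation
with kernel the centralizer of `T`, and the dihedral group of order 6 generated by `x` and `y` maps
isomorphically onto the permutations of `T` while commuting with the kernel: `G` is the direct
product of the two.

The kernel contains no involution `t`, since `t * (x * y)` would have order 6 and cube `t ∉ T`. An
element `k` of order 3 in the kernel gives `x * k` of order 6 with cube `x`, so `x * k` generates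
the same subgroup as `a`, and `k` lies in `⟨a ^ 2⟩`. Given the possible element orders, the kernel
is `⟨a ^ 2⟩`, of order 3.
-/

theorem nonempty_mulEquiv_prod_ker {G H Q : Type*} [Group G] [Group H] [Group Q] (φ : G →* Q)
    (s : H →* G) (hbij : Function.Bijective (φ.comp s))
    (hcomm : ∀ h, ∀ k ∈ φ.ker, Commute (s h) k) :
    Nonempty (G ≃* Q × φ.ker) := by
  let F : H × φ.ker →* G := s.noncommCoprod φ.ker.subtype fun h k => hcomm h k k.2
  have hφF (p : H × φ.ker) : φ (F p) = φ.comp s p.1 := by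
    change φ (s p.1 * p.2) = φ (s p.1)
    rw [map_mul, MonoidHom.mem_ker.mp p.2.2, mul_one]
  have hinj : Function.Injective F := by
    rintro ⟨h, k⟩ ⟨h', k'⟩ heq
    obtain rfl : h = h' := hbij.1 <| by
      simpa only [hφF] using congrArg φ heq
    exact Prod.ext rfl (Subtype.ext (mul_left_cancel heq))
  have hsurj : Function.Surjective F := fun g => by
    obtain ⟨h, hh⟩ := hbij.2 (φ g)
    have hker : (s h)⁻¹ * g ∈ φ.ker := by
      rw [MonoidHom.mem_ker, map_mul, map_inv, ← hh]
      exact inv_mul_cancel _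
    exact ⟨(h, ⟨_, hker⟩), mul_inv_cancel_left (s h) g⟩
  exact ⟨(MulEquiv.ofBijective F ⟨hinj, hsurj⟩).symm.trans
    ((MulEquiv.ofBijective _ hbij).prodCongr (MulEquiv.refl _))⟩

section DihedralLift

variable {G : Type*} [Group G] {n : ℕ} {p x : G}

/-- The homomorphism `ZMod n →+ Additive G` sending `1` to an element `p` with `p ^ n = 1`; it is
the restriction of `dihedralLift` to the rotations. -/
def zmodPowersHom (p : G) (hp : p ^ n = 1) : ZMod n →+ Additive G :=
  ZMod.lift n ⟨zmultiplesHom (Additive G) (Additive.ofMul p), by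
    rw [zmultiplesHom_apply, natCast_zsmul, ← ofMul_pow, hp, ofMul_one]⟩

theorem zmodPowersHom_intCast (hp : p ^ n = 1) (k : ℤ) :
    (zmodPowersHom p hp k).toMul = p ^ k := by
  rw [zmodPowersHom, ZMod.lift_coe]
  rfl

theorem zmodPowersHom_mul_comm (hp : p ^ n = 1) (hxp : x * p * x⁻¹ = p⁻¹) (i : ZMod n) :
    (zmodPowersHom p hp i).toMul * x = x * (zmodPowersHom p hp (-i)).toMul := by
  obtain ⟨k, rfl⟩ := ZMod.intCast_surjective i
  have hinv : x * (p ^ k)⁻¹ * x⁻¹ = p ^ k := by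
    rw [← inv_zpow, ← conj_zpow, ← conj_inv, hxp, inv_inv]
  rw [← Int.cast_neg, zmodPowersHom_intCast, zmodPowersHom_intCast, zpow_neg]
  exact (mul_inv_eq_iff_eq_mul.mp hinv).symm

/-- The homomorphism out of the dihedral group of order `2 * n` given by the presentation
`⟨p, x | p ^ n = 1, x ^ 2 = 1, x * p * x⁻¹ = p⁻¹⟩`: the rotation `r 1` goes to `p` and the
reflection `sr 0` to `x`. -/
def dihedralLift (p x : G) (hp : p ^ n = 1) (hx : x ^ 2 = 1) (hxp : x * p * x⁻¹ = p⁻¹) :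
    DihedralGroup n →* G :=
  MonoidHom.mk'
    (fun
      | .r i => (zmodPowersHom p hp i).toMul
      | .sr i => x * (zmodPowersHom p hp i).toMul) <| by
    have hswap := zmodPowersHom_mul_comm hp hxp
    rintro (i | i) (j | j)
    · simp only [DihedralGroup.r_mul_r, map_add, toMul_add]
    · simp only [DihedralGroup.r_mul_sr]
      rw [← mul_assoc, hswap, mul_assoc, ← toMul_add, ← map_add, neg_add_eq_sub]
    · simp only [DihedralGroup.sr_mul_r, map_add, toMul_add, mul_assoc]
    · simp only [DihedralGroup.sr_mul_sr]
      rw [mul_assoc, ← mul_assoc _ x, hswap, mul_assoc, ← toMul_add, ← map_add, neg_add_eq_sub,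
        ← mul_assoc, ← pow_two, hx, one_mul]

theorem dihedralLift_r_one (hp : p ^ n = 1) (hx : x ^ 2 = 1) (hxp : x * p * x⁻¹ = p⁻¹) :
    dihedralLift p x hp hx hxp (.r 1) = p := by
  change (zmodPowersHom p hp 1).toMul = p
  rw [← Int.cast_one, zmodPowersHom_intCast, zpow_one]

theorem dihedralLift_sr_zero (hp : p ^ n = 1) (hx : x ^ 2 = 1) (hxp : x * p * x⁻¹ = p⁻¹) :
    dihedralLift p x hp hx hxp (.sr 0) = x := by
  change x * (zmodPowersHom p hp 0).toMul = x
  rw [map_zero, toMul_zero, mul_one]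

theorem dihedralLift_mem {H : Subgroup G} (hp : p ^ n = 1) (hx : x ^ 2 = 1)
    (hxp : x * p * x⁻¹ = p⁻¹) (hpH : p ∈ H) (hxH : x ∈ H) (d : DihedralGroup n) :
    dihedralLift p x hp hx hxp d ∈ H := by
  have hrot (i : ZMod n) : (zmodPowersHom p hp i).toMul ∈ H := by
    obtain ⟨k, rfl⟩ := ZMod.intCast_surjective i
    rw [zmodPowersHom_intCast]
    exact H.zpow_mem hpH k
  cases d with
  | r i => exact hrot i
  | sr i => exact H.mul_mem hxH (hrot i)

end DihedralLift

section ConjPerm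

variable {G : Type*} [Group G] {T : Set G}

/-- The action of a group by conjugation on a conjugation-invariant subset, as a homomorphism into
the permutations of that subset. -/
def conjPermHom (T : Set G) (hT : ∀ g, ∀ t ∈ T, g * t * g⁻¹ ∈ T) : G →* Equiv.Perm T :=
  let S : SubMulAction (ConjAct G) G :=
    { carrier := T
      smul_mem' := fun g t ht => ConjAct.smul_def g t ▸ hT (ConjAct.ofConjAct g) t ht }
  (MulAction.toPermHom (ConjAct G) S).comp ConjAct.toConjAct.toMonoidHom

theorem coe_conjPermHom_apply (hT : ∀ g, ∀ t ∈ T, g * t * g⁻¹ ∈ T) (g : G) (t : T) :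
    (conjPermHom T hT g t : G) = g * t * g⁻¹ :=
  rfl

theorem ker_conjPermHom (hT : ∀ g, ∀ t ∈ T, g * t * g⁻¹ ∈ T) :
    (conjPermHom T hT).ker = Subgroup.centralizer T := by
  ext g
  rw [MonoidHom.mem_ker, Equiv.ext_iff, Subtype.forall, Subgroup.mem_centralizer_iff]
  refine forall₂_congr fun t ht => ?_
  rw [Subtype.ext_iff, coe_conjPermHom_apply, Equiv.Perm.one_apply, mul_inv_eq_iff_eq_mul, eq_comm]

end ConjPerm

section ConjTriple

variable {G : Type*} [Group G] {x y : G}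

/-- Two elements of a group together with the conjugate of the second by the first. For
non-commuting involutions with a conjugation-invariant triple these are the three reflections of
a dihedral group of order 6. -/
def conjTriple (x y : G) : Set G :=
  {x, y, x * y * x⁻¹}

instance finite_conjTriple : Finite (conjTriple x y) :=
  inferInstanceAs (Finite ({x, y, x * y * x⁻¹} : Set G))

theorem left_mem_conjTriple : x ∈ conjTriple x y := Or.inl rfl

theorem right_mem_conjTriple : y ∈ conjTriple x y := Or.inr (Or.inl rfl)

theorem mem_centralizer_conjTriple {g : G} :
    g ∈ Subgroup.centralizer (conjTriple x y) ↔ Commute g x ∧ Commute g y := by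
  refine ⟨fun h => ⟨(h x left_mem_conjTriple).symm, (h y right_mem_conjTriple).symm⟩, ?_⟩
  rintro ⟨hgx, hgy⟩ t (rfl | rfl | rfl)
  · exact hgx.eq.symm
  · exact hgy.eq.symm
  · exact ((hgx.mul_right hgy).mul_right hgx.inv_right).eq.symm

theorem ne_of_not_commute (hne : ¬Commute x y) : x ≠ y := fun h => hne (h ▸ Commute.refl x)

theorem conj_ne_left_of_not_commute (hne : ¬Commute x y) : x * y * x⁻¹ ≠ x := fun h =>
  ne_of_not_commute hne (mul_left_cancel (mul_inv_eq_iff_eq_mul.mp h)).symm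

theorem conj_ne_right_of_not_commute (hne : ¬Commute x y) : x * y * x⁻¹ ≠ y := fun h =>
  hne (mul_inv_eq_iff_eq_mul.mp h)

theorem ncard_conjTriple (hne : ¬Commute x y) : (conjTriple x y).ncard = 3 :=
  Set.ncard_eq_three.mpr ⟨x, y, x * y * x⁻¹, ne_of_not_commute hne,
    (conj_ne_left_of_not_commute hne).symm, (conj_ne_right_of_not_commute hne).symm, rfl⟩

theorem notMem_centralizer_of_mem_conjTriple (hne : ¬Commute x y) {t : G}
    (ht : t ∈ conjTriple x y) : t ∉ Subgroup.centralizer (conjTriple x y) := by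
  rw [mem_centralizer_conjTriple]
  rintro ⟨htx, hty⟩
  rcases ht with rfl | rfl | rfl
  · exact hne hty
  · exact hne htx.symm
  · exact hne (Commute.conj_iff x |>.mp (by simpa only [mul_inv_cancel_right] using htx)).symm

variable (hT : ∀ g, ∀ t ∈ conjTriple x y, g * t * g⁻¹ ∈ conjTriple x y)
  (hx : x ^ 2 = 1) (hy : y ^ 2 = 1) (hne : ¬Commute x y)

include hT hne in
theorem conj_eq_conj_of_conjTriple : y * x * y⁻¹ = x * y * x⁻¹ := by
  have hne' : ¬Commute y x := fun h => hne h.symm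
  rcases hT y x left_mem_conjTriple with h | h | h
  · exact absurd h (conj_ne_right_of_not_commute hne')
  · exact absurd h (conj_ne_left_of_not_commute hne')
  · exact h

include hT hx hne in
/-- Conjugation by `g` permutes the two members of the triple other than `x`, so its square fixes
both of them. -/
theorem commute_sq_of_commute {g : G} (hg : Commute g x) : Commute (g ^ 2) y := by
  have hsq : g ^ 2 * y * (g ^ 2)⁻¹ = g * (g * y * g⁻¹) * g⁻¹ := by
    simp only [pow_two, mul_inv_rev, mul_assoc]
  refine mul_inv_eq_iff_eq_mul.mp (hsq.trans ?_)
  rcases hT g y right_mem_conjTriple with h | h | h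
  · have hyx : y = x := mul_left_cancel ((mul_inv_eq_iff_eq_mul.mp h).trans hg.eq.symm)
    exact absurd hyx.symm (ne_of_not_commute hne)
  · rw [h, h]
  · calc g * (g * y * g⁻¹) * g⁻¹ = (g * x) * y * (g * x)⁻¹ := by
          rw [h]; simp only [mul_inv_rev, mul_assoc]
      _ = x * (g * y * g⁻¹) * x⁻¹ := by rw [hg.eq]; simp only [mul_inv_rev, mul_assoc]
      _ = x ^ 2 * y * (x ^ 2)⁻¹ := by rw [h]; simp only [pow_two, mul_inv_rev, mul_assoc]
      _ = y := by rw [hx, one_mul, inv_one, mul_one]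

include hT hx hy hne

theorem orderOf_mul_of_conjTriple : orderOf (x * y) = 3 := by
  have hxi : x⁻¹ = x := inv_eq_of_mul_eq_one_left (pow_two x ▸ hx)
  have hyi : y⁻¹ = y := inv_eq_of_mul_eq_one_left (pow_two y ▸ hy)
  have hbraid : y * x * y = x * y * x := by
    simpa only [hxi, hyi] using conj_eq_conj_of_conjTriple hT hne
  refine orderOf_eq_prime ?_ fun h => ne_of_not_commute hne ?_
  · calc (x * y) ^ 3 = x * y * x * (y * x * y) := by
          simp only [pow_succ, pow_zero, one_mul, mul_assoc]
      _ = x * y * x ^ 2 * y * x := by rw [hbraid]; simp only [pow_two, mul_assoc]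
      _ = x * y ^ 2 * x := by rw [hx]; simp only [pow_two, mul_one, mul_assoc]
      _ = 1 := by rw [hy, mul_one, ← pow_two, hx]
  · rw [eq_inv_of_mul_eq_one_left h, hyi]

theorem six_dvd_card_of_conjPermHom_mem {H : Subgroup (Equiv.Perm (conjTriple x y))}
    (hxH : conjPermHom _ hT x ∈ H) (hyH : conjPermHom _ hT y ∈ H) : 6 ∣ Nat.card H := by
  have hker {g : G} (hg : ¬(Commute g x ∧ Commute g y)) : conjPermHom _ hT g ≠ 1 := by
    rwa [Ne, ← MonoidHom.mem_ker, ker_conjPermHom, mem_centralizer_conjTriple]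
  have hxy : ¬Commute (x * y) x := fun h => hne (mul_left_cancel (mul_assoc x y x ▸ h.eq)).symm
  have h2 : orderOf (conjPermHom _ hT x) = 2 :=
    orderOf_eq_prime (by rw [← map_pow, hx, map_one]) (hker fun h => hne h.2)
  have h3 : orderOf (conjPermHom _ hT (x * y)) = 3 :=
    orderOf_eq_prime
      (by rw [← map_pow, ← orderOf_mul_of_conjTriple hT hx hy hne, pow_orderOf_eq_one, map_one])
      (hker fun h => hxy h.1)
  have h2H : 2 ∣ Nat.card H := h2 ▸ Subgroup.orderOf_dvd_natCard H hxH
  have h3H : 3 ∣ Nat.card H :=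
    h3 ▸ Subgroup.orderOf_dvd_natCard H (map_mul (conjPermHom _ hT) x y ▸ mul_mem hxH hyH)
  exact Nat.Coprime.mul_dvd_of_dvd_of_dvd (by norm_num) h2H h3H

theorem bijective_conjPermHom_comp_dihedralLift (hp : (x * y) ^ 3 = 1)
    (hxp : x * (x * y) * x⁻¹ = (x * y)⁻¹) :
    Function.Bijective ((conjPermHom _ hT).comp (dihedralLift (x * y) x hp hx hxp)) := by
  set ψ := (conjPermHom _ hT).comp (dihedralLift (x * y) x hp hx hxp)
  have hT3 : Nat.card (conjTriple x y) = 3 := ncard_conjTriple hne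
  have hperm : Nat.card (Equiv.Perm (conjTriple x y)) = 6 := by
    rw [Nat.card_perm, hT3]
    rfl
  have hx_mem : conjPermHom _ hT x ∈ ψ.range :=
    ⟨.sr 0, congrArg (conjPermHom _ hT) (dihedralLift_sr_zero hp hx hxp)⟩
  have hxy_mem : conjPermHom _ hT (x * y) ∈ ψ.range :=
    ⟨.r 1, congrArg (conjPermHom _ hT) (dihedralLift_r_one hp hx hxp)⟩
  have hy_mem : conjPermHom _ hT y ∈ ψ.range := by
    simpa only [map_mul, inv_mul_cancel_left] using mul_mem (inv_mem hx_mem) hxy_mem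
  have hrange : ψ.range = ⊤ :=
    Subgroup.eq_top_of_le_card _ <| hperm ▸
      Nat.le_of_dvd Nat.card_pos (six_dvd_card_of_conjPermHom_mem hT hx hy hne hx_mem hy_mem)
  exact (MonoidHom.range_eq_top.mp hrange).bijective_of_nat_card_le (by
    rw [DihedralGroup.nat_card, hperm])

theorem nonempty_mulEquiv_perm_prod_centralizer_conjTriple :
    Nonempty (G ≃* Equiv.Perm (Fin 3) × Subgroup.centralizer (conjTriple x y)) := by
  have hp : (x * y) ^ 3 = 1 := orderOf_mul_of_conjTriple hT hx hy hne ▸ pow_orderOf_eq_one (x * y)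
  have hyi : y⁻¹ = y := inv_eq_of_mul_eq_one_left (pow_two y ▸ hy)
  have hxp : x * (x * y) * x⁻¹ = (x * y)⁻¹ := by
    rw [mul_inv_rev, ← mul_assoc, ← pow_two, hx, one_mul, hyi]
  have hcomm (d : DihedralGroup 3) (k : G) (hk : k ∈ (conjPermHom _ hT).ker) :
      Commute (dihedralLift (x * y) x hp hx hxp d) k := by
    rw [ker_conjPermHom, mem_centralizer_conjTriple] at hk
    exact Subgroup.mem_centralizer_singleton_iff.mp <| dihedralLift_mem hp hx hxp
      (Subgroup.mem_centralizer_singleton_iff.mpr (hk.1.mul_right hk.2).symm)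
      (Subgroup.mem_centralizer_singleton_iff.mpr hk.1.symm) d
  obtain ⟨e⟩ := nonempty_mulEquiv_prod_ker (conjPermHom _ hT) _
    (bijective_conjPermHom_comp_dihedralLift hT hx hy hne hp hxp) hcomm
  exact ⟨e.trans ((Finite.equivFinOfCardEq (ncard_conjTriple hne)).permCongrHom.prodCongr
    (MulEquiv.subgroupCongr (ker_conjPermHom hT)))⟩

end ConjTriple

theorem encard_triple_le {α : Type*} (u v w : α) : ({u, v, w} : Set α).encard ≤ 3 := by
  classical
  have hcoe : ({u, v, w} : Set α) = ({u, v, w} : Finset α) := by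
    rw [Finset.coe_insert, Finset.coe_pair]
  rw [hcoe, Set.encard_coe_eq_coe_finsetCard]
  exact_mod_cast Finset.card_le_three

theorem eq_triple_of_encard_le_three {α : Type*} {s : Set α} (hs : s.encard ≤ 3) {u v w : α}
    (hu : u ∈ s) (hv : v ∈ s) (hw : w ∈ s) (huv : u ≠ v) (huw : u ≠ w) (hvw : v ≠ w) :
    s = {u, v, w} := by
  refine (Set.Finite.eq_of_subset_of_encard_le (Set.toFinite _) ?_ ?_).symm
  · rintro t (rfl | rfl | rfl) <;> assumption
  · rwa [Set.encard_eq_three.mpr ⟨u, v, w, huv, huw, hvw, rfl⟩]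

section OrderSix

variable {G : Type*} [Group G]

theorem pow_eq_pow_of_zpowers_eq {n : ℕ} {g h : G} (hg : orderOf g = 2 * n)
    (hgh : Subgroup.zpowers g = Subgroup.zpowers h) : g ^ n = h ^ n := by
  rcases n.eq_zero_or_pos with rfl | hn
  · rw [pow_zero, pow_zero]
  have hh : orderOf h = 2 * n := by rw [← hg, ← Nat.card_zpowers, ← Nat.card_zpowers, hgh]
  have hgn : (g ^ n) ^ 2 = 1 := by rw [← pow_mul, mul_comm, ← hg, pow_orderOf_eq_one]
  have hhn : h ^ n ≠ 1 := fun h1 => by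
    have hle := Nat.le_of_dvd hn (orderOf_dvd_of_pow_eq_one h1)
    omega
  obtain ⟨k, rfl⟩ : h ∈ Subgroup.zpowers g := hgh ▸ Subgroup.mem_zpowers h
  have hcomm : (g ^ k) ^ n = (g ^ n) ^ k := by
    rw [← zpow_natCast, zpow_comm, zpow_natCast]
  have hsq : (g ^ n) ^ (2 : ℤ) = 1 := mod_cast hgn
  rw [hcomm] at hhn ⊢
  rcases Int.even_or_odd' k with ⟨j, rfl | rfl⟩
  · exact absurd (by rw [zpow_mul, hsq, one_zpow]) hhn
  · rw [zpow_add_one, zpow_mul, hsq, one_zpow, one_mul]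

theorem orderOf_conj (g u : G) : orderOf (g * u * g⁻¹) = orderOf u :=
  (MulAut.conj g).orderOf_eq u

theorem sq_pow_three_eq_one {g : G} (hg : orderOf g = 6) : (g ^ 3) ^ 2 = 1 :=
  (pow_mul g 3 2).symm.trans (orderOf_dvd_iff_pow_eq_one.mp hg.dvd)

theorem zpowers_mem_isCyclic_and_card {g : G} {n : ℕ} (hg : orderOf g = n) :
    Subgroup.zpowers g ∈ {H : Subgroup G | IsCyclic H ∧ Nat.card H = n} :=
  ⟨inferInstance, (Nat.card_zpowers g).trans hg⟩

variable {a b : G} (ha : orderOf a = 6) (hb : orderOf b = 6) (hne : ¬Commute (a ^ 3) (b ^ 3))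
  (hcard : {H : Subgroup G | IsCyclic H ∧ Nat.card H = 6}.encard ≤ 3)

include ha hb hne hcard

theorem cyclicSubgroups_eq_triple :
    {H : Subgroup G | IsCyclic H ∧ Nat.card H = 6} =
      {Subgroup.zpowers a, Subgroup.zpowers b, Subgroup.zpowers (a ^ 3 * b * (a ^ 3)⁻¹)} := by
  have hc : orderOf (a ^ 3 * b * (a ^ 3)⁻¹) = 6 := (orderOf_conj _ b).trans hb
  refine eq_triple_of_encard_le_three hcard (zpowers_mem_isCyclic_and_card ha)
    (zpowers_mem_isCyclic_and_card hb) (zpowers_mem_isCyclic_and_card hc)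
    (fun h => ?_) (fun h => ?_) (fun h => ?_)
  · exact ne_of_not_commute hne (pow_eq_pow_of_zpowers_eq (n := 3) ha h)
  · exact conj_ne_left_of_not_commute hne
      (conj_pow.symm.trans (pow_eq_pow_of_zpowers_eq (n := 3) ha h).symm)
  · exact conj_ne_right_of_not_commute hne
      (conj_pow.symm.trans (pow_eq_pow_of_zpowers_eq (n := 3) hb h).symm)

theorem image_pow_three_eq_conjTriple :
    (· ^ 3) '' {g : G | orderOf g = 6} = conjTriple (a ^ 3) (b ^ 3) := by
  ext t
  constructor
  · rintro ⟨g, hg, rfl⟩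
    have hg : orderOf g = 6 := hg
    have hmem := zpowers_mem_isCyclic_and_card hg
    rw [cyclicSubgroups_eq_triple ha hb hne hcard] at hmem
    rcases hmem with h | h | h
    · exact Or.inl (pow_eq_pow_of_zpowers_eq (n := 3) hg h)
    · exact Or.inr (Or.inl (pow_eq_pow_of_zpowers_eq (n := 3) hg h))
    · exact Or.inr (Or.inr ((pow_eq_pow_of_zpowers_eq (n := 3) hg h).trans conj_pow))
  · rintro (rfl | rfl | rfl)
    · exact ⟨a, ha, rfl⟩
    · exact ⟨b, hb, rfl⟩
    · exact ⟨a ^ 3 * b * (a ^ 3)⁻¹, (orderOf_conj _ b).trans hb, conj_pow⟩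

theorem conj_mem_conjTriple (g t : G) (ht : t ∈ conjTriple (a ^ 3) (b ^ 3)) :
    g * t * g⁻¹ ∈ conjTriple (a ^ 3) (b ^ 3) := by
  rw [← image_pow_three_eq_conjTriple ha hb hne hcard] at ht ⊢
  obtain ⟨u, hu, rfl⟩ := ht
  exact ⟨g * u * g⁻¹, (orderOf_conj g u).trans hu, conj_pow⟩

theorem zpowers_eq_of_pow_three_eq {g : G} (hg : orderOf g = 6) (hga : g ^ 3 = a ^ 3) :
    Subgroup.zpowers g = Subgroup.zpowers a := by
  have hmem := zpowers_mem_isCyclic_and_card hg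
  rw [cyclicSubgroups_eq_triple ha hb hne hcard] at hmem
  rcases hmem with h | h | h
  · exact h
  · exact absurd (hga.symm.trans (pow_eq_pow_of_zpowers_eq (n := 3) hg h)) (ne_of_not_commute hne)
  · have hpow := (pow_eq_pow_of_zpowers_eq (n := 3) hg h).trans conj_pow
    exact absurd (hpow.symm.trans hga) (conj_ne_left_of_not_commute hne)

theorem orderOf_ne_two_of_mem_centralizer {t : G}
    (ht : t ∈ Subgroup.centralizer (conjTriple (a ^ 3) (b ^ 3))) : orderOf t ≠ 2 := by
  intro ht2
  have hcomm : Commute t (a ^ 3 * b ^ 3) :=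
    (mem_centralizer_conjTriple.mp ht).elim Commute.mul_right
  have hab : orderOf (a ^ 3 * b ^ 3) = 3 :=
    orderOf_mul_of_conjTriple (conj_mem_conjTriple ha hb hne hcard) (sq_pow_three_eq_one ha)
      (sq_pow_three_eq_one hb) hne
  have hord : orderOf (t * (a ^ 3 * b ^ 3)) = 6 := by
    rw [hcomm.orderOf_mul_eq_mul_orderOf_of_coprime (by rw [ht2, hab]; norm_num), ht2, hab]
  have hcube : (t * (a ^ 3 * b ^ 3)) ^ 3 = t := by
    rw [hcomm.mul_pow, orderOf_dvd_iff_pow_eq_one.mp hab.dvd, mul_one, pow_succ,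
      orderOf_dvd_iff_pow_eq_one.mp ht2.dvd, one_mul]
  have hmem : t ∈ conjTriple (a ^ 3) (b ^ 3) :=
    image_pow_three_eq_conjTriple ha hb hne hcard ▸ ⟨_, hord, hcube⟩
  exact notMem_centralizer_of_mem_conjTriple hne hmem ht

theorem mem_zpowers_sq_of_orderOf_eq_three {k : G} (hk : orderOf k = 3)
    (hka : Commute k (a ^ 3)) : k ∈ Subgroup.zpowers (a ^ 2) := by
  have hk3 : k ^ 3 = 1 := orderOf_dvd_iff_pow_eq_one.mp hk.dvd
  have hx : (a ^ 3) ^ 2 = 1 := sq_pow_three_eq_one ha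
  have hx2 : orderOf (a ^ 3) = 2 := by
    rw [orderOf_pow' a three_ne_zero, ha]
    rfl
  have hord : orderOf (a ^ 3 * k) = 6 := by
    rw [hka.symm.orderOf_mul_eq_mul_orderOf_of_coprime (by rw [hk, hx2]; norm_num), hk, hx2]
  have hcube : (a ^ 3 * k) ^ 3 = a ^ 3 := by
    rw [hka.symm.mul_pow, hk3, mul_one, pow_succ _ 2, hx, one_mul]
  have hfourth : (a ^ 3 * k) ^ 4 = k := by
    rw [hka.symm.mul_pow, pow_mul _ 2 2, hx, one_pow, one_mul, pow_succ, hk3, one_mul]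
  obtain ⟨m, hm⟩ : a ^ 3 * k ∈ Subgroup.zpowers a :=
    zpowers_eq_of_pow_three_eq ha hb hne hcard hord hcube ▸ Subgroup.mem_zpowers _
  have hsq : (a ^ 2) ^ m = (a ^ 3 * k) ^ 2 := by
    rw [← hm, ← zpow_natCast, zpow_comm, zpow_natCast]
  rw [← hfourth, pow_mul _ 2 2, ← hsq]
  exact pow_mem (zpow_mem (Subgroup.mem_zpowers _) m) 2

theorem centralizer_conjTriple_eq_zpowers
    (horders : ∀ g : G, orderOf g ∈ ({1, 2, 3, 4, 6} : Set ℕ)) :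
    Subgroup.centralizer (conjTriple (a ^ 3) (b ^ 3)) = Subgroup.zpowers (a ^ 2) := by
  have hinv {t : G} := orderOf_ne_two_of_mem_centralizer ha hb hne hcard (t := t)
  have ha3 : Commute a (a ^ 3) := (Commute.refl a).pow_right 3
  apply le_antisymm
  · intro k hk
    rcases horders k with h | h | h | h | h
    · exact orderOf_eq_one_iff.mp h ▸ one_mem _
    · exact absurd h (hinv hk)
    · exact mem_zpowers_sq_of_orderOf_eq_three ha hb hne hcard h
        (mem_centralizer_conjTriple.mp hk).1
    · refine absurd ?_ (hinv (pow_mem hk 2))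
      rw [orderOf_pow' k two_ne_zero, h]
      rfl
    · refine absurd ?_ (hinv (pow_mem hk 3))
      rw [orderOf_pow' k three_ne_zero, h]
      rfl
  · rw [Subgroup.zpowers_le, mem_centralizer_conjTriple]
    exact ⟨ha3.pow_left 2, commute_sq_of_commute (conj_mem_conjTriple ha hb hne hcard)
      (sq_pow_three_eq_one ha) hne ha3⟩

end OrderSix

theorem iso_S3_times_Z3_general {G : Type*} [Group G] {a b : G}
    (horders : ∀ g : G, orderOf g ∈ ({1, 2, 3, 4, 6} : Set ℕ))
    (ha : orderOf a = 6) (hb : orderOf b = 6) (hne : ¬Commute (a ^ 3) (b ^ 3))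
    (hcard : {H : Subgroup G | IsCyclic H ∧ Nat.card H = 6}.encard ≤ 3) :
    Nonempty (G ≃* Equiv.Perm (Fin 3) × Multiplicative (ZMod 3)) := by
  obtain ⟨e⟩ := nonempty_mulEquiv_perm_prod_centralizer_conjTriple
    (conj_mem_conjTriple ha hb hne hcard) (sq_pow_three_eq_one ha) (sq_pow_three_eq_one hb) hne
  have hK : Nat.card (Subgroup.centralizer (conjTriple (a ^ 3) (b ^ 3))) = 3 := by
    rw [centralizer_conjTriple_eq_zpowers ha hb hne hcard horders, Nat.card_zpowers,
      orderOf_pow' a two_ne_zero, ha]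
    rfl
  have hZ : Nat.card (Multiplicative (ZMod 3)) = 3 := Nat.card_zmod 3
  have : Fact (Nat.Prime 3) := ⟨Nat.prime_three⟩
  exact ⟨e.trans ((MulEquiv.refl _).prodCongr (mulEquivOfPrimeCardEq hK hZ))⟩

/-- Let `G` be a finite group with `π_e(G) ⊆ {1,2,3,4,6}` whose cyclic subgroups of
order 6 are exactly `⟨a⟩, ⟨b⟩, ⟨c⟩`, where `a, b, c` have order 6 and `a² = b² = c²`.
Suppose `a³ ∉ Z(G)`, the subgroup `C_G(a³) ∩ C_G(b³)` has index 2 in `C_G(a³)`, and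
`a³ ∉ C_G(a³) ∩ C_G(b³)`. Then `G ≅ S_3 × Z_3`. -/
theorem iso_S3_times_Z3
    (G : Type) [Group G] [Finite G] (a b c : G)
    (horders : ∀ g : G, orderOf g ∈ ({1, 2, 3, 4, 6} : Set ℕ))
    (ha : orderOf a = 6) (hb : orderOf b = 6) (hc : orderOf c = 6)
    (hab : Subgroup.zpowers a ≠ Subgroup.zpowers b)
    (hac : Subgroup.zpowers a ≠ Subgroup.zpowers c)
    (hbc : Subgroup.zpowers b ≠ Subgroup.zpowers c)
    (hset : {H : Subgroup G | IsCyclic H ∧ Nat.card H = 6} =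
      {Subgroup.zpowers a, Subgroup.zpowers b, Subgroup.zpowers c})
    (hsq1 : a ^ 2 = b ^ 2) (hsq2 : b ^ 2 = c ^ 2)
    (hZa : a ^ 3 ∉ Subgroup.center G)
    (hindex : (Subgroup.centralizer {a ^ 3} ⊓
      Subgroup.centralizer {b ^ 3}).relIndex (Subgroup.centralizer {a ^ 3}) = 2)
    (hnotmem : a ^ 3 ∉ Subgroup.centralizer {a ^ 3} ⊓ Subgroup.centralizer {b ^ 3}) :
    Nonempty (G ≃* Equiv.Perm (Fin 3) × Multiplicative (ZMod 3)) :=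
  iso_S3_times_Z3_general horders ha hb
    (fun h => hnotmem ⟨Subgroup.mem_centralizer_singleton_iff.mpr rfl,
      Subgroup.mem_centralizer_singleton_iff.mpr h⟩)
    (hset ▸ encard_triple_le _ _ _)
end
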